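/- arXiv:2206.01608 — 4 statements merged into one kernel-verified Lean document; each statement's English description precedes it below -/
import Mathlib

section
/- Let Ã be a real r×r Hurwitz matrix, K a real r×p matrix, and Q a symmetric positive definite real r×r matrix satisfying the Lyapunov equation Ãᵀ Q + Q Ã + K Kᵀ = 0. Define J := (1/2)(Ã Q⁻¹ − Q⁻¹ Ãᵀ) and R := −(1/2)(Ã Q⁻¹ + Q⁻¹ Ãᵀ). Then: (i) J is skew-symmetric; (ii) R = (1/2) Q⁻¹ K Kᵀ Q⁻¹, and in particular R is symmetric positive semidefinite; and (iii) (J − R) Q = Ã. -/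
open Matrix

/-- A real square matrix is Hurwitz if all of its complex eigenvalues
have negative real part. -/
def IsHurwitz {n : ℕ} (A : Matrix (Fin n) (Fin n) ℝ) : Prop :=
  ∀ μ ∈ spectrum ℂ (A.map Complex.ofReal), μ.re < 0

/-!
Since `Q⁻¹` is Hermitian, `J` and `-R` are the skew-Hermitian and Hermitian parts of `A * Q⁻¹`, so
`J - R = A * Q⁻¹`. Multiplying the Lyapunov equation by `Q⁻¹` on both sides identifies `R` as half
of a congruence transform of its constant term, which is positive semidefinite.
-/

section

variable {n : Type*} [Fintype n]

lemma conjTranspose_mul_sub_mul_conjTranspose {α : Type*} [NonUnitalRing α] [StarRing α]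
    (A : Matrix n n α) {B : Matrix n n α} (hB : B.IsHermitian) :
    (A * B - B * Aᴴ)ᴴ = -(A * B - B * Aᴴ) := by
  rw [conjTranspose_sub, conjTranspose_mul, conjTranspose_mul, conjTranspose_conjTranspose, hB.eq,
    neg_sub]

variable [DecidableEq n]

lemma mul_inv_add_inv_mul_of_sylvester {α : Type*} [CommRing α] {A B Q W : Matrix n n α}
    (hQ : IsUnit Q.det) (hW : B * Q + Q * A + W = 0) :
    A * Q⁻¹ + Q⁻¹ * B = -(Q⁻¹ * W * Q⁻¹) := by
  refine eq_neg_of_add_eq_zero_left ?_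
  calc
    A * Q⁻¹ + Q⁻¹ * B + Q⁻¹ * W * Q⁻¹ = Q⁻¹ * (B * Q + Q * A + W) * Q⁻¹ := by
      simp only [mul_add, add_mul, ← Matrix.mul_assoc, nonsing_inv_mul Q hQ, Matrix.one_mul,
        mul_nonsing_inv_cancel_right Q _ hQ, add_comm (A * Q⁻¹)]
    _ = 0 := by rw [hW, Matrix.mul_zero, Matrix.zero_mul]

open scoped ComplexOrder in
theorem stmt_0_general {𝕜 : Type*} [RCLike 𝕜] {A Q W J R : Matrix n n 𝕜}
    (hQ : Q.IsHermitian) (hQdet : IsUnit Q.det) (hW : W.PosSemidef)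
    (hLyap : Aᴴ * Q + Q * A + W = 0)
    (hJ : J = (1 / 2 : ℝ) • (A * Q⁻¹ - Q⁻¹ * Aᴴ))
    (hR : R = -((1 / 2 : ℝ) • (A * Q⁻¹ + Q⁻¹ * Aᴴ))) :
    Jᴴ = -J ∧ R = (1 / 2 : ℝ) • (Q⁻¹ * W * Q⁻¹) ∧ R.PosSemidef ∧ (J - R) * Q = A := by
  have hJ_skew : Jᴴ = -J := by
    rw [hJ, conjTranspose_smul, star_trivial,
      conjTranspose_mul_sub_mul_conjTranspose A hQ.inv, smul_neg]
  have hR_eq : R = (1 / 2 : ℝ) • (Q⁻¹ * W * Q⁻¹) := by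
    rw [hR, mul_inv_add_inv_mul_of_sylvester hQdet hLyap, smul_neg, neg_neg]
  have h_congr : (Q⁻¹ * W * Q⁻¹).PosSemidef := by
    simpa only [hQ.inv.eq] using hW.mul_mul_conjTranspose_same Q⁻¹
  have hR_psd : R.PosSemidef := hR_eq ▸ h_congr.smul (by norm_num)
  have h_sub : J - R = A * Q⁻¹ := by
    rw [hJ, hR]
    module
  exact ⟨hJ_skew, hR_eq, hR_psd, by rw [h_sub, nonsing_inv_mul_cancel_right Q A hQdet]⟩

end

/-- Every Hurwitz matrix `Ã` admits a port-Hamiltonian factorization `Ã = (J − R)Q`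
obtained from a symmetric positive definite solution `Q` of the Lyapunov equation
`Ãᵀ Q + Q Ã + K Kᵀ = 0`: the matrix `J := (1/2)(Ã Q⁻¹ − Q⁻¹ Ãᵀ)` is skew-symmetric,
the matrix `R := −(1/2)(Ã Q⁻¹ + Q⁻¹ Ãᵀ)` equals `(1/2) Q⁻¹ K Kᵀ Q⁻¹` and is
symmetric positive semidefinite, and `(J − R) Q = Ã`. -/
theorem stmt_0 {r p : ℕ} (A : Matrix (Fin r) (Fin r) ℝ) (hA : IsHurwitz A)
    (K : Matrix (Fin r) (Fin p) ℝ) (Q : Matrix (Fin r) (Fin r) ℝ)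
    (hQsymm : Qᵀ = Q) (hQpd : Q.PosDef)
    (hLyap : Aᵀ * Q + Q * A + K * Kᵀ = 0)
    (J R : Matrix (Fin r) (Fin r) ℝ)
    (hJ : J = (1 / 2 : ℝ) • (A * Q⁻¹ - Q⁻¹ * Aᵀ))
    (hR : R = -((1 / 2 : ℝ) • (A * Q⁻¹ + Q⁻¹ * Aᵀ))) :
    Jᵀ = -J ∧
    R = (1 / 2 : ℝ) • (Q⁻¹ * (K * Kᵀ) * Q⁻¹) ∧
    R.PosSemidef ∧
    (J - R) * Q = A := by
  simpa only [conjTranspose_eq_transpose_of_trivial] using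
    stmt_0_general hQpd.isHermitian hQpd.det_pos.ne'.isUnit (posSemidef_self_mul_conjTranspose K)
      hLyap hJ hR
end

section
/- Let A be a real n×n Hurwitz matrix, B a real n×m matrix, C a real m×n matrix, and D a real m×m matrix, and define the transfer function H(s) := C (sI − A)⁻¹ B + D for complex s not an eigenvalue of A. If for every ω ∈ ℝ the Hermitian matrix H(iω) + H(iω)^H is positive semidefinite, then the symmetric matrix S₀ := (1/2)(Dᵀ + D) is positive semidefinite. Moreover, H(iω) + H(iω)^H converges to 2 S₀ = D + Dᵀ as ω → ∞. -/
open Matrix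
open scoped ComplexOrder

/-! As `s → ∞` the resolvent `(sI − A)⁻¹` vanishes, so `H(s) → D` and
`H(iω) + H(iω)ᴴ → D + Dᴴ`; the spectrum of `A` is finite, so `iω` avoids it for large `ω`.
Positive semidefinite matrices form a closed set, which therefore contains the limit. -/

section

open Filter Topology Bornology

variable {ι κ : Type*}

theorem isClosed_setOf_posSemidef {R : Type*} [Ring R] [PartialOrder R] [StarRing R]
    [TopologicalSpace R] [IsTopologicalSemiring R] [ContinuousStar R] [T2Space R]
    [ClosedIciTopology R] : IsClosed {M : Matrix κ κ R | M.PosSemidef} := by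
  have hHermitian : IsClosed {M : Matrix κ κ R | M.IsHermitian} :=
    isClosed_eq (by fun_prop) continuous_id
  simp only [PosSemidef, Set.ofPred_and, Set.ofPred_forall]
  refine hHermitian.inter (isClosed_iInter fun x => isClosed_Ici.preimage ?_)
  unfold Finsupp.sum
  fun_prop

theorem posSemidef_of_posSemidef_map {R S : Type*} [Ring R] [PartialOrder R] [StarRing R]
    [Ring S] [PartialOrder S] [StarRing S] (f : R →+* S) (hf : Function.Injective f)
    (hstar : Function.Semiconj f star star) (hnonneg : ∀ r, 0 ≤ f r → 0 ≤ r)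
    {M : Matrix κ κ R} (hM : (M.map f).PosSemidef) : M.PosSemidef := by
  refine ⟨(isHermitian_map_iff hstar hf).1 hM.isHermitian, fun x => hnonneg _ ?_⟩
  simpa [Finsupp.sum_mapRange_index, map_finsuppSum, hstar.eq] using
    hM.2 (x.mapRange f (map_zero f))

theorem map_ofReal_add_transpose (D : Matrix κ κ ℝ) :
    (D + Dᵀ).map Complex.ofReal = D.map Complex.ofReal + (D.map Complex.ofReal)ᴴ := by
  ext i j
  simp

variable [Fintype ι] [DecidableEq ι]

section TransferFunction

variable {𝕜 ν : Type*}

/-- The transfer function `s ↦ C (sI − A)⁻¹ B + D` of the linear system `(A, B, C, D)`. At an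
eigenvalue `s` of `A` the inverse is `0` by convention, so the value there is `D`. -/
noncomputable def transferFunction [Field 𝕜] (A : Matrix ι ι 𝕜) (B : Matrix ι ν 𝕜)
    (C : Matrix κ ι 𝕜) (D : Matrix κ ν 𝕜) (s : 𝕜) : Matrix κ ν 𝕜 :=
  C * (s • (1 : Matrix ι ι 𝕜) - A)⁻¹ * B + D

variable [NontriviallyNormedField 𝕜] [CompleteSpace 𝕜]

open scoped Matrix.Norms.Operator in
theorem tendsto_inv_smul_one_sub_cobounded (A : Matrix ι ι 𝕜) :
    Tendsto (fun s : 𝕜 => (s • (1 : Matrix ι ι 𝕜) - A)⁻¹) (cobounded 𝕜) (𝓝 0) := by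
  have : @CompleteSpace (Matrix ι ι 𝕜) PseudoMetricSpace.toUniformSpace :=
    FiniteDimensional.complete 𝕜 _
  refine (spectrum.resolvent_tendsto_cobounded A).congr fun s => ?_
  rw [resolvent, Algebra.algebraMap_eq_smul_one, nonsing_inv_eq_ringInverse]

theorem tendsto_transferFunction_cobounded (A : Matrix ι ι 𝕜) (B : Matrix ι ν 𝕜)
    (C : Matrix κ ι 𝕜) (D : Matrix κ ν 𝕜) :
    Tendsto (transferFunction A B C D) (cobounded 𝕜) (𝓝 D) := by
  have hcont : Continuous fun X : Matrix ι ι 𝕜 => C * X * B + D := by fun_prop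
  have hlim := (hcont.tendsto 0).comp (tendsto_inv_smul_one_sub_cobounded A)
  rwa [Matrix.mul_zero, Matrix.zero_mul, zero_add] at hlim

end TransferFunction

theorem tendsto_I_mul_ofReal_atTop_cobounded :
    Tendsto (fun ω : ℝ => Complex.I * (ω : ℂ)) atTop (cobounded ℂ) :=
  (tendsto_mul_left_cobounded Complex.I_ne_zero).comp (RCLike.tendsto_ofReal_atTop_cobounded ℂ)

theorem stmt_3_general (A : Matrix ι ι ℂ) (B : Matrix ι κ ℂ) (C : Matrix κ ι ℂ)
    (D : Matrix κ κ ℂ) (H : ℂ → Matrix κ κ ℂ)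
    (hH : ∀ s ∉ spectrum ℂ A, H s = transferFunction A B C D s)
    (hPR : ∃ᶠ ω : ℝ in atTop, (H (Complex.I * ω) + (H (Complex.I * ω))ᴴ).PosSemidef) :
    (D + Dᴴ).PosSemidef ∧
      Tendsto (fun ω : ℝ => H (Complex.I * ω) + (H (Complex.I * ω))ᴴ) atTop (𝓝 (D + Dᴴ)) := by
  have hspectrum : ∀ᶠ s in cobounded ℂ, s ∉ spectrum ℂ A :=
    isBounded_def.1 A.finite_spectrum.isBounded
  have hH_tendsto : Tendsto H (cobounded ℂ) (𝓝 D) :=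
    (tendsto_transferFunction_cobounded A B C D).congr' <|
      hspectrum.mono fun s hs => (hH s hs).symm
  have hcont : Continuous fun X : Matrix κ κ ℂ => X + Xᴴ := by fun_prop
  have hlim := (hcont.tendsto D).comp (hH_tendsto.comp tendsto_I_mul_ofReal_atTop_cobounded)
  exact ⟨isClosed_setOf_posSemidef.mem_of_frequently_of_tendsto hPR hlim, hlim⟩

end

/-- For a positive-real transfer function `H(s) = C (sI − A)⁻¹ B + D` with `A` Hurwitz,
the symmetric part `S₀ := (1/2)(Dᵀ + D)` of the feedthrough is positive semidefinite,
and `H(iω) + H(iω)ᴴ → 2 S₀ = D + Dᵀ` as `ω → ∞`. -/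
theorem stmt_3 {n m : ℕ} (A : Matrix (Fin n) (Fin n) ℝ) (hA : IsHurwitz A)
    (B : Matrix (Fin n) (Fin m) ℝ) (C : Matrix (Fin m) (Fin n) ℝ)
    (D : Matrix (Fin m) (Fin m) ℝ)
    (H : ℂ → Matrix (Fin m) (Fin m) ℂ)
    (hH : ∀ s : ℂ, s ∉ spectrum ℂ (A.map Complex.ofReal) →
      H s = C.map Complex.ofReal *
        (s • (1 : Matrix (Fin n) (Fin n) ℂ) - A.map Complex.ofReal)⁻¹ *
        B.map Complex.ofReal + D.map Complex.ofReal)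
    (hPR : ∀ ω : ℝ, (H (Complex.I * (ω : ℂ)) + (H (Complex.I * (ω : ℂ)))ᴴ).PosSemidef) :
    ((1 / 2 : ℝ) • (Dᵀ + D)).PosSemidef ∧
    Filter.Tendsto (fun ω : ℝ => H (Complex.I * (ω : ℂ)) + (H (Complex.I * (ω : ℂ)))ᴴ)
      Filter.atTop (nhds ((2 : ℝ) • ((1 / 2 : ℝ) • (Dᵀ + D)) |>.map Complex.ofReal)) ∧
    (2 : ℝ) • ((1 / 2 : ℝ) • (Dᵀ + D)) = D + Dᵀ := by
  have hS₀ : (2 : ℝ) • ((1 / 2 : ℝ) • (Dᵀ + D)) = D + Dᵀ := by module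
  obtain ⟨hD, hlim⟩ := stmt_3_general _ _ _ _ H hH (.of_forall hPR)
  rw [← map_ofReal_add_transpose] at hD hlim
  have hD_real : (D + Dᵀ).PosSemidef := posSemidef_of_posSemidef_map Complex.ofRealHom
    Complex.ofReal_injective (fun r => by simp) (fun _ => Complex.zero_le_real.1) hD
  exact ⟨add_comm D Dᵀ ▸ hD_real.smul (by norm_num), hS₀ ▸ hlim, hS₀⟩
end

section
/- Let Ã be a real r×r Hurwitz matrix, let K : ℝ → ℝ^{r×p} be differentiable at a point t₀ with derivative K'(t₀), and let Q : ℝ → ℝ^{r×r} be the function assigning to each t the unique solution Q(t) of the Lyapunov equation Ãᵀ Q(t) + Q(t) Ã + K(t) K(t)ᵀ = 0. Then Q is differentiable at t₀ and its derivative Q'(t₀) is the unique solution of the Lyapunov equation Ãᵀ Q'(t₀) + Q'(t₀) Ã + K'(t₀) K(t₀)ᵀ + K(t₀) K'(t₀)ᵀ = 0. -/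
open Matrix

attribute [local instance] Matrix.normedAddCommGroup Matrix.normedSpace

/-!
The Lyapunov operator `X ↦ Aᵀ * X + X * A` is linear on a finite-dimensional space, so as soon as
it is injective the solution `Q t` is the image of `K t * (K t)ᵀ` under a fixed continuous linear
map, and the derivative of `Q` is obtained by differentiating the equation.

For injectivity, if `A * X = X * B` then `p(A) * X = X * p(B)` for every polynomial `p`. When the
characteristic polynomials `χ_A` and `χ_B` satisfy a Bézout identity `u * χ_A + v * χ_B = 1`,
Cayley–Hamilton gives `X = X * u(B) * χ_A(B) = X * χ_A(B) * u(B) = χ_A(A) * X * u(B) = 0`.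
The characteristic polynomials of `Aᵀ` and `-A` are coprime for Hurwitz `A`, because the spectra of
`A` and `-A` lie in opposite open half-planes.
-/

open Polynomial Topology

section Sylvester

variable {m n R : Type*} [Fintype m] [Fintype n] [CommRing R]

/-- The operator `X ↦ A * X + X * B` of the Sylvester equation; the Lyapunov operator of `A` is
`sylvesterMap Aᵀ A`. -/
def sylvesterMap (A : Matrix m m R) (B : Matrix n n R) : Matrix m n R →ₗ[R] Matrix m n R :=
  mulLeftLinearMap n R A + mulRightLinearMap m R B

@[simp]
lemma sylvesterMap_apply (A : Matrix m m R) (B : Matrix n n R) (X : Matrix m n R) :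
    sylvesterMap A B X = A * X + X * B :=
  rfl

variable [DecidableEq m] [DecidableEq n] {A : Matrix m m R} {B : Matrix n n R} {X : Matrix m n R}

lemma pow_mul_eq_mul_pow_of_mul_eq_mul (h : A * X = X * B) (k : ℕ) : A ^ k * X = X * B ^ k := by
  induction k with
  | zero => simp
  | succ k ih =>
    rw [pow_succ, Matrix.mul_assoc, h, ← Matrix.mul_assoc, ih, Matrix.mul_assoc, ← pow_succ]

lemma aeval_mul_eq_mul_aeval_of_mul_eq_mul (h : A * X = X * B) (f : R[X]) :
    aeval A f * X = X * aeval B f := by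
  induction f using Polynomial.induction_on' with
  | add f g hf hg => simp only [map_add, Matrix.add_mul, Matrix.mul_add, hf, hg]
  | monomial k a =>
    simp only [aeval_monomial, ← Algebra.smul_def, Matrix.smul_mul, Matrix.mul_smul,
      pow_mul_eq_mul_pow_of_mul_eq_mul h]

theorem eq_zero_of_mul_eq_mul_of_isCoprime_charpoly (hAB : IsCoprime A.charpoly B.charpoly)
    (h : A * X = X * B) : X = 0 := by
  obtain ⟨u, v, huv⟩ := hAB
  have hXA : X * aeval B A.charpoly = 0 := by
    rw [← aeval_mul_eq_mul_aeval_of_mul_eq_mul h, aeval_self_charpoly, Matrix.zero_mul]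
  calc
    X = X * aeval B (A.charpoly * u + v * B.charpoly) := by
      rw [mul_comm A.charpoly u, huv, map_one, Matrix.mul_one]
    _ = X * aeval B A.charpoly * aeval B u := by
      rw [map_add, map_mul, map_mul, aeval_self_charpoly, mul_zero, add_zero, Matrix.mul_assoc]
    _ = 0 := by rw [hXA, Matrix.zero_mul]

theorem sylvesterMap_injective (hAB : IsCoprime A.charpoly (-B).charpoly) :
    Function.Injective (sylvesterMap A B : Matrix m n R →ₗ[R] Matrix m n R) := by
  refine (injective_iff_map_eq_zero _).2 fun X hX => ?_
  refine eq_zero_of_mul_eq_mul_of_isCoprime_charpoly hAB ?_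
  rw [sylvesterMap_apply] at hX
  rw [Matrix.mul_neg]
  exact eq_neg_of_add_eq_zero_left hX

end Sylvester

theorem isCoprime_charpoly_iff_disjoint_spectrum {m n F : Type*} (L : Type*) [Fintype m] [Fintype n]
    [DecidableEq m] [DecidableEq n] [Field F] [Field L] [IsAlgClosed L] [Algebra F L]
    (A : Matrix m m F) (B : Matrix n n F) :
    IsCoprime A.charpoly B.charpoly ↔
      Disjoint (spectrum L (A.map (algebraMap F L))) (spectrum L (B.map (algebraMap F L))) := by
  rw [isCoprime_iff_aeval_ne_zero_of_isAlgClosed _ L, Set.disjoint_left]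
  simp only [mem_spectrum_iff_isRoot_charpoly, charpoly_map, IsRoot.def, eval_map_algebraMap,
    imp_iff_not_or, ne_eq]

lemma IsHurwitz.isCoprime_charpoly_transpose_neg {n : ℕ} {A : Matrix (Fin n) (Fin n) ℝ}
    (hA : IsHurwitz A) : IsCoprime Aᵀ.charpoly (-A).charpoly := by
  rw [charpoly_transpose, isCoprime_charpoly_iff_disjoint_spectrum ℂ, Complex.coe_algebraMap,
    Matrix.map_neg _ Complex.ofReal_neg, ← spectrum.neg_eq, Set.disjoint_left]
  intro μ hμ hnegμ
  have hre : μ.re < 0 := hA μ hμ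
  have hnegre : (-μ).re < 0 := hA (-μ) hnegμ
  rw [Complex.neg_re] at hnegre
  linarith

section Derivative

variable {𝕜 : Type*} [NontriviallyNormedField 𝕜]

lemma hasDerivAt_matrix_mul {l m n 𝔸 : Type*} [Finite l] [Fintype m] [Finite n] [NormedRing 𝔸]
    [NormedAlgebra 𝕜 𝔸] {M : 𝕜 → Matrix l m 𝔸} {N : 𝕜 → Matrix m n 𝔸} {M' : Matrix l m 𝔸}
    {N' : Matrix m n 𝔸} {t₀ : 𝕜} (hM : HasDerivAt M M' t₀) (hN : HasDerivAt N N' t₀) :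
    HasDerivAt (fun t => M t * N t) (M' * N t₀ + M t₀ * N') t₀ := by
  cases nonempty_fintype l
  cases nonempty_fintype n
  refine hasDerivAt_pi.2 fun i => hasDerivAt_pi.2 fun j => ?_
  simp only [Matrix.mul_apply, Matrix.add_apply, ← Finset.sum_add_distrib]
  exact HasDerivAt.fun_sum fun k _ =>
    (hasDerivAt_pi.1 (hasDerivAt_pi.1 hM i) k).mul (hasDerivAt_pi.1 (hasDerivAt_pi.1 hN k) j)

lemma hasDerivAt_matrix_transpose {m n E : Type*} [Finite m] [Finite n] [NormedAddCommGroup E]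
    [NormedSpace 𝕜 E] {M : 𝕜 → Matrix m n E} {M' : Matrix m n E} {t₀ : 𝕜}
    (hM : HasDerivAt M M' t₀) : HasDerivAt (fun t => (M t)ᵀ) M'ᵀ t₀ := by
  cases nonempty_fintype m
  cases nonempty_fintype n
  exact hasDerivAt_pi.2 fun j => hasDerivAt_pi.2 fun i =>
    hasDerivAt_pi.1 (hasDerivAt_pi.1 hM i) j

lemma hasDerivAt_of_eventually_apply_add_eq_zero {E F : Type*} [NormedAddCommGroup E]
    [NormedSpace 𝕜 E] [NormedAddCommGroup F] [NormedSpace 𝕜 F] (L : E ≃L[𝕜] F) {Q : 𝕜 → E}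
    {C : 𝕜 → F} {C' : F} {t₀ : 𝕜} (hC : HasDerivAt C C' t₀)
    (hQ : ∀ᶠ t in 𝓝 t₀, L (Q t) + C t = 0) : HasDerivAt Q (L.symm (-C')) t₀ := by
  have hQ_eq : Q =ᶠ[𝓝 t₀] fun t => L.symm (-C t) :=
    hQ.mono fun t ht => L.eq_symm_apply.2 (eq_neg_of_add_eq_zero_left ht)
  exact (L.symm.hasFDerivAt.comp_hasDerivAt t₀ hC.neg).congr_of_eventuallyEq hQ_eq

theorem stmt_10_general {m n : Type*} [Fintype m] [Fintype n] [DecidableEq m] [DecidableEq n]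
    [CompleteSpace 𝕜] {A : Matrix m m 𝕜} {B : Matrix n n 𝕜}
    (hAB : IsCoprime A.charpoly (-B).charpoly) {C Q : 𝕜 → Matrix m n 𝕜} {C' : Matrix m n 𝕜} {t₀ : 𝕜}
    (hC : HasDerivAt C C' t₀) (hQ : ∀ᶠ t in 𝓝 t₀, A * Q t + Q t * B + C t = 0) :
    ∃ Q' : Matrix m n 𝕜,
      HasDerivAt Q Q' t₀ ∧
      A * Q' + Q' * B + C' = 0 ∧
      ∀ P : Matrix m n 𝕜, A * P + P * B + C' = 0 → P = Q' := by
  let L := (LinearEquiv.ofInjectiveEndo _ (sylvesterMap_injective hAB)).toContinuousLinearEquiv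
  have solution_iff (P : Matrix m n 𝕜) : A * P + P * B + C' = 0 ↔ P = L.symm (-C') :=
    add_eq_zero_iff_eq_neg.trans L.eq_symm_apply.symm
  exact ⟨L.symm (-C'), hasDerivAt_of_eventually_apply_add_eq_zero L hC hQ,
    (solution_iff _).2 rfl, fun P => (solution_iff P).1⟩

end Derivative

/-- Differentiability of the Lyapunov solution: if `Ã` is Hurwitz, `K : ℝ → ℝ^{r×p}`
is differentiable at `t₀` with derivative `K'`, and `Q t` solves
`Ãᵀ Q(t) + Q(t) Ã + K(t) K(t)ᵀ = 0` for every `t`, then `Q` is differentiable at `t₀`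
and its derivative is the unique solution `Q'` of
`Ãᵀ Q' + Q' Ã + K' K(t₀)ᵀ + K(t₀) K'ᵀ = 0`. -/
theorem stmt_10 {r p : ℕ} (A : Matrix (Fin r) (Fin r) ℝ) (hA : IsHurwitz A)
    (K : ℝ → Matrix (Fin r) (Fin p) ℝ) (K' : Matrix (Fin r) (Fin p) ℝ) (t₀ : ℝ)
    (hK : HasDerivAt K K' t₀)
    (Q : ℝ → Matrix (Fin r) (Fin r) ℝ)
    (hQ : ∀ t : ℝ, Aᵀ * Q t + Q t * A + K t * (K t)ᵀ = 0) :
    ∃ Q' : Matrix (Fin r) (Fin r) ℝ,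
      HasDerivAt Q Q' t₀ ∧
      Aᵀ * Q' + Q' * A + K' * (K t₀)ᵀ + K t₀ * K'ᵀ = 0 ∧
      ∀ P : Matrix (Fin r) (Fin r) ℝ,
        Aᵀ * P + P * A + K' * (K t₀)ᵀ + K t₀ * K'ᵀ = 0 → P = Q' := by
  simpa only [← add_assoc] using stmt_10_general hA.isCoprime_charpoly_transpose_neg
    (hasDerivAt_matrix_mul hK (hasDerivAt_matrix_transpose hK)) (.of_forall hQ)
end

section
/- Let A be a real n×n Hurwitz matrix, B a real n×m matrix, C a real m×n matrix, and G(s) := C (sI − A)⁻¹ B. Let λ₁, …, λ_r be distinct complex numbers with Re λ_i < 0, λ_j + λ_k ≠ 0 for all j, k, and l_i, r_i ∈ ℂ^m. Define F̂(l₁,…,l_r, r₁,…,r_r, λ₁,…,λ_r) := −2 Σ_{i=1}^r l_iᵀ G(−λ_i) r_i + Σ_{j=1}^r Σ_{k=1}^r (l_jᵀ l_k)(r_kᵀ r_j)/(−λ_j − λ_k), and H_r(s) := Σ_{k=1}^r l_k r_kᵀ/(s − λ_k). Then F̂, viewed as a function of the single variable r_i ∈ ℂ^m with all other arguments fixed,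 is differentiable, and its derivative at r_i is the ℂ-linear functional v ↦ 2 l_iᵀ ( H_r(−λ_i) − G(−λ_i) ) v. -/
open Matrix

/-! Since `(lⱼᵀ lₖ)/(−λⱼ − λₖ)` is symmetric in `j` and `k`, the double sum in `F̂` is a quadratic
form in the tuple `(r₁, …, r_r)`, so its gradient in `rⱼ` is twice the vector
`Σₖ (lⱼᵀ lₖ)/(−λⱼ − λₖ) rₖ = Hᵣ(−λⱼ)ᵀ lⱼ`. Together with the linear part this gives the joint
derivative `w ↦ Σⱼ 2 lⱼᵀ (Hᵣ(−λⱼ) − G(−λⱼ)) wⱼ`, and the partial derivative in `rᵢ` follows by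
the chain rule. -/

noncomputable section

section PoleResidue

variable {𝕜 ι p m : Type*} [Field 𝕜] [Fintype p]

/-- The transfer function `Hᵣ(s) = Σₖ lₖ rₖᵀ / (s − λₖ)` in pole–residue form. At a pole the
corresponding summand is `0` rather than undefined. -/
def poleResidue [Fintype ι] (lam : ι → 𝕜) (l : ι → p → 𝕜) (ρ : ι → m → 𝕜) (s : 𝕜) : Matrix p m 𝕜 :=
  ∑ k, (s - lam k)⁻¹ • vecMulVec (l k) (ρ k)

/-- The symmetric weights `(lⱼᵀ lₖ) / (−λⱼ − λₖ)` with which `rₖᵀ rⱼ` enters the `H₂` objective. -/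
def h2Weight (lam : ι → 𝕜) (l : ι → p → 𝕜) : Matrix ι ι 𝕜 :=
  of fun j k ↦ (l j ⬝ᵥ l k) / (-(lam j) - lam k)

lemma h2Weight_isSymm (lam : ι → 𝕜) (l : ι → p → 𝕜) : (h2Weight lam l).IsSymm := by
  ext j k
  simp only [h2Weight, transpose_apply, of_apply, dotProduct_comm (l k), neg_sub_comm (lam k)]

lemma vecMul_poleResidue_neg [Fintype ι] (lam : ι → 𝕜) (l : ι → p → 𝕜) (ρ : ι → m → 𝕜)
    (j : ι) :
    l j ᵥ* poleResidue lam l ρ (-(lam j)) = ∑ k, h2Weight lam l j k • ρ k := by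
  simp only [poleResidue, h2Weight, vecMul_sum, vecMul_smul, vecMul_vecMulVec, smul_smul, of_apply,
    div_eq_inv_mul]

/-- The pole–residue form `F̂` of the `H₂` objective `‖G − Hᵣ‖² − ‖G‖²`, for an arbitrary
matrix-valued function `G`. -/
def h2Objective [Fintype ι] [Fintype m] (G : 𝕜 → Matrix p m 𝕜) (lam : ι → 𝕜) (l : ι → p → 𝕜)
    (ρ : ι → m → 𝕜) : 𝕜 :=
  -2 * ∑ j, l j ⬝ᵥ (G (-(lam j)) *ᵥ ρ j) +
    ∑ j, ∑ k, (l j ⬝ᵥ l k) * (ρ k ⬝ᵥ ρ j) / (-(lam j) - lam k)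

end PoleResidue

section PartialDerivative

lemma pi_single_id_eq_single {R ι : Type*} {E : ι → Type*} [Semiring R] [DecidableEq ι]
    [∀ j, AddCommMonoid (E j)] [∀ j, Module R (E j)] [∀ j, TopologicalSpace (E j)] (i : ι) :
    ContinuousLinearMap.pi (Pi.single i (.id R (E i))) = ContinuousLinearMap.single R E i := by
  ext v j
  obtain rfl | hji := eq_or_ne j i <;> simp [*]

lemma hasFDerivAt_comp_update {𝕜 ι F : Type*} {E : ι → Type*} [NontriviallyNormedField 𝕜]
    [Finite ι] [DecidableEq ι] [∀ j, NormedAddCommGroup (E j)] [∀ j, NormedSpace 𝕜 (E j)]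
    [NormedAddCommGroup F] [NormedSpace 𝕜 F] {f : (∀ j, E j) → F} {f' : (∀ j, E j) →L[𝕜] F}
    {x : ∀ j, E j} (hf : HasFDerivAt f f' x) (i : ι) :
    HasFDerivAt (fun v ↦ f (Function.update x i v)) (f' ∘L .single 𝕜 E i) (x i) := by
  cases nonempty_fintype ι
  have hupdate := hasFDerivAt_update (𝕜 := 𝕜) x (x i)
  rw [pi_single_id_eq_single] at hupdate
  rw [← Function.update_eq_self i x] at hf
  exact hf.comp (x i) hupdate

end PartialDerivative

section Gradient

variable {𝕜 ι p m : Type*} [NontriviallyNormedField 𝕜] [Fintype ι] [Fintype p] [Fintype m]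

/-- The continuous linear functional `v ↦ uᵀ v` on column vectors (no complex conjugation); it
represents a gradient as a Fréchet derivative. -/
def dotProductCLM (u : m → 𝕜) : (m → 𝕜) →L[𝕜] 𝕜 :=
  ∑ a, u a • ContinuousLinearMap.proj a

@[simp]
lemma dotProductCLM_apply (u v : m → 𝕜) : dotProductCLM u v = u ⬝ᵥ v := by
  simp [dotProductCLM, dotProduct]

/-- The continuous linear functional `w ↦ Σⱼ gⱼᵀ wⱼ` on tuples of column vectors; it represents the
derivative of a function of such tuples by the partial gradients `gⱼ`. -/
def sumDotProductCLM (g : ι → m → 𝕜) : (ι → m → 𝕜) →L[𝕜] 𝕜 :=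
  ∑ j, dotProductCLM (g j) ∘L ContinuousLinearMap.proj j

@[simp]
lemma sumDotProductCLM_apply (g w : ι → m → 𝕜) : sumDotProductCLM g w = ∑ j, g j ⬝ᵥ w j := by
  simp [sumDotProductCLM]

lemma sumDotProductCLM_comp_single [DecidableEq ι] (g : ι → m → 𝕜) (i : ι) :
    sumDotProductCLM g ∘L .single 𝕜 (fun _ ↦ m → 𝕜) i = dotProductCLM (g i) := by
  ext v
  rw [ContinuousLinearMap.comp_apply, sumDotProductCLM_apply, Finset.sum_eq_single i] <;>
    simp +contextual

lemma hasFDerivAt_dotProduct {E : Type*} [NormedAddCommGroup E] [NormedSpace 𝕜 E]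
    {f g : E → m → 𝕜} {f' g' : E →L[𝕜] m → 𝕜} {x : E}
    (hf : HasFDerivAt f f' x) (hg : HasFDerivAt g g' x) :
    HasFDerivAt (fun y ↦ f y ⬝ᵥ g y)
      (dotProductCLM (f x) ∘L g' + dotProductCLM (g x) ∘L f') x := by
  have hcoord (a : m) := (hasFDerivAt_pi'.1 hf a).fun_mul (hasFDerivAt_pi'.1 hg a)
  refine (HasFDerivAt.fun_sum fun a _ ↦ hcoord a).congr_fderiv ?_
  ext v
  simp [dotProduct, Finset.sum_add_distrib]

lemma hasFDerivAt_sum_sum_mul_dotProduct {S : Matrix ι ι 𝕜} (hS : S.IsSymm) (ρ : ι → m → 𝕜) :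
    HasFDerivAt (fun σ : ι → m → 𝕜 ↦ ∑ j, ∑ k, S j k * (σ k ⬝ᵥ σ j))
      (sumDotProductCLM fun j ↦ (2 : 𝕜) • ∑ k, S j k • ρ k) ρ := by
  have hterm (j k : ι) := (hasFDerivAt_dotProduct (hasFDerivAt_apply (𝕜 := 𝕜) k ρ)
    (hasFDerivAt_apply j ρ)).const_mul (S j k)
  refine (HasFDerivAt.fun_sum fun j _ ↦ HasFDerivAt.fun_sum fun k _ ↦ hterm j k).congr_fderiv ?_
  ext w
  have hswap : ∑ j, ∑ k, S j k * (ρ j ⬝ᵥ w k) = ∑ j, ∑ k, S j k * (ρ k ⬝ᵥ w j) := by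
    rw [Finset.sum_comm]
    simp only [hS.apply]
  simp [Finset.sum_add_distrib, hswap, sum_dotProduct, two_mul]

lemma h2Objective_eq (G : 𝕜 → Matrix p m 𝕜) (lam : ι → 𝕜) (l : ι → p → 𝕜) (ρ : ι → m → 𝕜) :
    h2Objective G lam l ρ = -2 * sumDotProductCLM (fun j ↦ l j ᵥ* G (-(lam j))) ρ +
      ∑ j, ∑ k, h2Weight lam l j k * (ρ k ⬝ᵥ ρ j) := by
  simp only [h2Objective, h2Weight, sumDotProductCLM_apply, of_apply, dotProduct_mulVec,
    div_mul_eq_mul_div]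

lemma hasFDerivAt_h2Objective (G : 𝕜 → Matrix p m 𝕜) (lam : ι → 𝕜) (l : ι → p → 𝕜)
    (ρ : ι → m → 𝕜) :
    HasFDerivAt (h2Objective G lam l)
      (sumDotProductCLM fun j ↦
        (2 : 𝕜) • (l j ᵥ* (poleResidue lam l ρ (-(lam j)) - G (-(lam j))))) ρ := by
  have hlin := (sumDotProductCLM fun j ↦ l j ᵥ* G (-(lam j))).hasFDerivAt (x := ρ)
  have hquad := hasFDerivAt_sum_sum_mul_dotProduct (h2Weight_isSymm lam l) ρ
  rw [funext (h2Objective_eq G lam l)]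
  refine ((hlin.const_mul (-2)).add hquad).congr_fderiv ?_
  ext w
  simp [vecMul_sub, vecMul_poleResidue_neg, mul_sub, Finset.mul_sum, ← sub_eq_neg_add]

theorem stmt_11_general [DecidableEq ι] (G : 𝕜 → Matrix p m 𝕜) (lam : ι → 𝕜)
    (_hsum : ∀ j k, lam j + lam k ≠ 0) (l : ι → p → 𝕜) (ρ : ι → m → 𝕜) (i : ι) :
    HasFDerivAt (fun v ↦ h2Objective G lam l (Function.update ρ i v))
      (dotProductCLM ((2 : 𝕜) • (l i ᵥ* (poleResidue lam l ρ (-(lam i)) - G (-(lam i))))))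
      (ρ i) :=
  (hasFDerivAt_comp_update (hasFDerivAt_h2Objective G lam l ρ) i).congr_fderiv
    (sumDotProductCLM_comp_single _ i)

end Gradient

end

/-- Derivative of the pole–residue H2 objective with respect to a right residue
direction: `F̂ = −2 Σᵢ lᵢᵀ G(−λᵢ) rᵢ + Σⱼₖ (lⱼᵀ lₖ)(rₖᵀ rⱼ)/(−λⱼ − λₖ)`, viewed as a
function of `rᵢ` alone, is differentiable at `rᵢ` with derivative the linear
functional `v ↦ 2 lᵢᵀ (H_r(−λᵢ) − G(−λᵢ)) v`. -/
theorem stmt_11 {n m r : ℕ} (A : Matrix (Fin n) (Fin n) ℝ) (hA : IsHurwitz A)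
    (B : Matrix (Fin n) (Fin m) ℝ) (C : Matrix (Fin m) (Fin n) ℝ)
    (G : ℂ → Matrix (Fin m) (Fin m) ℂ)
    (hG : ∀ s : ℂ, s ∉ spectrum ℂ (A.map Complex.ofReal) →
      G s = C.map Complex.ofReal *
        (s • (1 : Matrix (Fin n) (Fin n) ℂ) - A.map Complex.ofReal)⁻¹ *
        B.map Complex.ofReal)
    (lam : Fin r → ℂ)
    (hdist : Function.Injective lam)
    (hstab : ∀ i, (lam i).re < 0)
    (hsum : ∀ j k, lam j + lam k ≠ 0)
    (l ρ : Fin r → (Fin m → ℂ))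
    (Hr : ℂ → Matrix (Fin m) (Fin m) ℂ)
    (hHr : ∀ s : ℂ, Hr s = ∑ k : Fin r, (s - lam k)⁻¹ • Matrix.vecMulVec (l k) (ρ k))
    (i : Fin r) :
    ∃ f' : (Fin m → ℂ) →L[ℂ] ℂ,
      HasFDerivAt (fun v : Fin m → ℂ =>
          -2 * ∑ i' : Fin r,
              l i' ⬝ᵥ (G (-(lam i')) *ᵥ (Function.update ρ i v) i') +
            ∑ j : Fin r, ∑ k : Fin r,
              (l j ⬝ᵥ l k) * ((Function.update ρ i v) k ⬝ᵥ (Function.update ρ i v) j) /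
                (-(lam j) - lam k))
        f' (ρ i) ∧
      ∀ v : Fin m → ℂ,
        f' v = 2 * (l i ⬝ᵥ ((Hr (-(lam i)) - G (-(lam i))) *ᵥ v)) := by
  obtain rfl : Hr = poleResidue lam l ρ := funext hHr
  exact ⟨_, stmt_11_general G lam hsum l ρ i, fun v ↦ by simp [dotProduct_mulVec]⟩
end
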